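/- Let P ⊂ ℝ^n be an n-dimensional lattice polytope such that all n complex roots of its Ehrhart polynomial L_P have real part equal to -1/2. Then ℓ_i(P) ≤ 2^i · binom(n,i) for all i = 0, …, n; that is, the inequalities of Wills' conjecture hold for P. -/

import Mathlib

open MeasureTheory Polynomial Pointwise

/-- The number of integer lattice points contained in a subset of `ℝ^n`. -/
noncomputable def latticePointCount {n : ℕ} (S : Set (Fin n → ℝ)) : ℕ :=
  {v : Fin n → ℤ | (fun i => (v i : ℝ)) ∈ S}.ncard

/-- A lattice polytope in `ℝ^n`: the convex hull of finitely many integer points. -/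
def IsLatticePolytope {n : ℕ} (P : Set (Fin n → ℝ)) : Prop :=
  ∃ V : Finset (Fin n → ℤ),
    P = convexHull ℝ ((fun v : Fin n → ℤ => fun i => (v i : ℝ)) '' (V : Set (Fin n → ℤ)))

/-- `L` is the Ehrhart polynomial of `P`: for every positive integer `k` its value at `k`
is the number of lattice points of the dilate `kP`. -/
def IsEhrhartPoly {n : ℕ} (P : Set (Fin n → ℝ)) (L : Polynomial ℝ) : Prop :=
  ∀ k : ℕ, 0 < k → L.eval (k : ℝ) = latticePointCount ((k : ℝ) • P)

open scoped Classical in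
/-- Euler characteristic on the line. -/
lemma euler_one {ι : Type*} (s : Finset ι) (a : ι → ℤ) (l r : ι → ℝ)
    (hlr : ∀ j ∈ s, l j ≤ r j)
    (h : ∀ t : ℝ, ∑ j ∈ s, (if t ∈ Set.Icc (l j) (r j) then a j else 0) = 0) :
    ∑ j ∈ s, a j = 0 := by
  have key : ∀ t : ℝ, ∑ j ∈ s with l j = t, a j = 0 := by
    intro t
    have ev : ∀ᶠ x in nhdsWithin t (Set.Iio t), ∀ j ∈ s,
        (x ∈ Set.Icc (l j) (r j) ↔ (t ∈ Set.Icc (l j) (r j) ∧ l j ≠ t)) := by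
      rw [Filter.eventually_all_finset]
      intro j hj
      have hx : ∀ᶠ x in nhdsWithin t (Set.Iio t), x < t := self_mem_nhdsWithin
      rcases le_or_gt t (l j) with h1 | h1
      · filter_upwards [hx] with x hx
        simp only [Set.mem_Icc]
        constructor
        · rintro ⟨h2, h3⟩; linarith
        · rintro ⟨⟨h2, h3⟩, h4⟩; exact absurd (le_antisymm h2 h1) h4
      · have h1' : ∀ᶠ x in nhdsWithin t (Set.Iio t), l j < x :=
          (lt_mem_nhds h1).filter_mono nhdsWithin_le_nhds
        rcases le_or_gt t (r j) with h2 | h2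
        · filter_upwards [hx, h1'] with x hx h1'
          simp only [Set.mem_Icc]
          exact ⟨fun _ => ⟨⟨h1.le, h2⟩, h1.ne⟩, fun _ => ⟨h1'.le, by linarith⟩⟩
        · have h2' : ∀ᶠ x in nhdsWithin t (Set.Iio t), r j < x :=
            (lt_mem_nhds h2).filter_mono nhdsWithin_le_nhds
          filter_upwards [h2'] with x h2'
          simp only [Set.mem_Icc]
          constructor
          · rintro ⟨h3, h4⟩; linarith
          · rintro ⟨⟨h3, h4⟩, h5⟩; linarith
    obtain ⟨x, hx⟩ := ev.exists
    have e : ∑ j ∈ s with l j = t, a j = ∑ j ∈ s, (if t ∈ Set.Icc (l j) (r j) then a j else 0)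
        - ∑ j ∈ s, (if x ∈ Set.Icc (l j) (r j) then a j else 0) := by
      rw [Finset.sum_filter, ← Finset.sum_sub_distrib]
      refine Finset.sum_congr rfl fun j hj => ?_
      rw [if_congr (hx j hj) rfl rfl]
      have := hlr j hj
      by_cases h1 : l j = t
      · have : t ∈ Set.Icc (l j) (r j) := ⟨h1.le, h1 ▸ this⟩
        simp [h1, this]
        intro h2; exact absurd (h1 ▸ this.2) (not_le.2 h2)
      · simp [h1]
    rw [e, h, h, sub_zero]
  rw [← Finset.sum_fiberwise_of_maps_to (t := s.image l) (g := l)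
    (fun j hj => Finset.mem_image_of_mem l hj)]
  exact Finset.sum_eq_zero fun t _ => key t

open scoped Classical in
/-- Existence of the Euler characteristic for compact convex sets. -/
lemma euler_char {ι : Type*} (s : Finset ι) (a : ι → ℤ) : ∀ (d : ℕ) (K : ι → Set (Fin d → ℝ)),
    (∀ j ∈ s, IsCompact (K j)) → (∀ j ∈ s, Convex ℝ (K j)) →
    (∀ x, ∑ j ∈ s, (if x ∈ K j then a j else 0) = 0) →
    ∑ j ∈ s, (if (K j).Nonempty then a j else 0) = 0 := by
  intro d
  induction d with
  | zero =>
    intro K _ _ h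
    refine Eq.trans ?_ (h default)
    refine Finset.sum_congr rfl fun j _ => if_congr ?_ rfl rfl
    constructor
    · rintro ⟨x, hx⟩; rwa [Subsingleton.elim default x]
    · intro hx; exact ⟨_, hx⟩
  | succ d ih =>
    intro K hK hC h
    have hsl : ∀ t : ℝ, ∑ j ∈ s,
        (if t ∈ (fun x : Fin (d+1) → ℝ => x 0) '' K j then a j else 0) = 0 := by
      intro t
      have := ih (fun j => {x | (Fin.cons t x : Fin (d+1) → ℝ) ∈ K j}) ?_ ?_ ?_
      · refine Eq.trans ?_ this
        refine Finset.sum_congr rfl fun j _ => if_congr ?_ rfl rfl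
        constructor
        · rintro ⟨x, hx, rfl⟩
          refine ⟨Fin.tail x, ?_⟩
          show Fin.cons (x 0) (Fin.tail x) ∈ K j
          rwa [Fin.cons_self_tail]
        · rintro ⟨x, hx⟩
          exact ⟨_, hx, rfl⟩
      · intro j hj
        have hc : Continuous (fun x : Fin d → ℝ => (Fin.cons t x : Fin (d+1) → ℝ)) := by
          refine continuous_pi fun i => ?_
          refine Fin.cases ?_ (fun i => ?_) i
          · simpa using continuous_const
          · simpa using continuous_apply i
        have him : {x : Fin d → ℝ | (Fin.cons t x : Fin (d+1) → ℝ) ∈ K j} =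
            Fin.tail '' (K j ∩ {x | x 0 = t}) := by
          ext x
          constructor
          · intro hx; exact ⟨_, ⟨hx, rfl⟩, Fin.tail_cons _ _⟩
          · rintro ⟨y, ⟨hy, h0⟩, rfl⟩
            show Fin.cons t (Fin.tail y) ∈ K j
            rw [← (show y 0 = t from h0), Fin.cons_self_tail]; exact hy
        rw [him]
        refine IsCompact.image ?_ (continuous_pi fun i => continuous_apply _)
        exact (hK j hj).inter_right (isClosed_eq (continuous_apply _) continuous_const)
      · intro j hj x hx y hy p q hp hq hpq
        have := hC j hj hx hy hp hq hpq
        show _ ∈ K j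
        convert this using 1
        ext i
        refine Fin.cases ?_ (fun i => ?_) i
        · simp [← add_mul, hpq]
        · simp
      · intro x
        exact h (Fin.cons t x)
    have hIcc : ∀ j ∈ s, (K j).Nonempty → ∃ l r : ℝ, l ≤ r ∧
        (fun x : Fin (d+1) → ℝ => x 0) '' K j = Set.Icc l r := by
      intro j hj hne
      have hc : IsCompact ((fun x : Fin (d+1) → ℝ => x 0) '' K j) :=
        (hK j hj).image (continuous_apply _)
      have hcv : Convex ℝ ((fun x : Fin (d+1) → ℝ => x 0) '' K j) :=
        (hC j hj).linear_image (LinearMap.proj 0 : (Fin (d+1) → ℝ) →ₗ[ℝ] ℝ)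
      have := eq_Icc_of_connected_compact ⟨hne.image _, hcv.isPreconnected⟩ hc
      refine ⟨_, _, ?_, this⟩
      have h2 := hne.image (fun x : Fin (d+1) → ℝ => x 0)
      rw [this] at h2
      exact Set.nonempty_Icc.1 h2
    choose! l r hlr hI using hIcc
    rw [← Finset.sum_filter]
    apply euler_one _ a l r
    · intro j hj
      rw [Finset.mem_filter] at hj
      exact hlr j hj.1 hj.2
    · intro t
      refine Eq.trans ?_ (hsl t)
      rw [Finset.sum_filter]
      refine Finset.sum_congr rfl fun j hj => ?_
      by_cases hne : (K j).Nonempty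
      · rw [if_pos hne, hI j hj hne]
        congr
      · rw [if_neg hne, Set.not_nonempty_iff_eq_empty.1 hne]; simp

lemma convexHull_range_fin {m n : ℕ} (v : Fin m → Fin n → ℝ) :
    convexHull ℝ (Set.range v) =
      {x | ∃ w : Fin m → ℝ, (∀ i, 0 ≤ w i) ∧ ∑ i, w i = 1 ∧ ∑ i, w i • v i = x} := by
  apply Set.Subset.antisymm
  · apply convexHull_min
    · rintro _ ⟨i, rfl⟩
      refine ⟨Pi.single i 1, ?_, ?_, ?_⟩
      · intro j; by_cases h : j = i
        · subst h; simp
        · simp [h]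
      · simp
      · rw [Finset.sum_eq_single i] <;> simp +contextual
    · rintro x ⟨w, h0, h1, rfl⟩ y ⟨w', h0', h1', rfl⟩ p q hp hq hpq
      refine ⟨fun i => p * w i + q * w' i, ?_, ?_, ?_⟩
      · intro i; have := h0 i; have := h0' i; positivity
      · rw [Finset.sum_add_distrib, ← Finset.mul_sum, ← Finset.mul_sum, h1, h1']; simpa
      · simp only [add_smul, Finset.sum_add_distrib, mul_smul, Finset.smul_sum]
  · rintro x ⟨w, h0, h1, h2⟩
    exact mem_convexHull_of_exists_fintype w v h0 h1 (fun i => ⟨i, rfl⟩) h2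

lemma mem_smul_hull {m n : ℕ} (hm : 0 < m) (v : Fin m → Fin n → ℝ) (c : ℝ) (hc : 0 ≤ c)
    (x : Fin n → ℝ) :
    x ∈ c • convexHull ℝ (Set.range v) ↔
      ∃ w : Fin m → ℝ, (∀ i, 0 ≤ w i) ∧ ∑ i, w i = c ∧ ∑ i, w i • v i = x := by
  rw [convexHull_range_fin]
  constructor
  · rintro ⟨y, ⟨w, h0, h1, rfl⟩, rfl⟩
    refine ⟨fun i => c * w i, fun i => mul_nonneg hc (h0 i), ?_, ?_⟩
    · rw [← Finset.mul_sum, h1, mul_one]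
    · simp only [Finset.smul_sum, mul_smul]
  · rintro ⟨w, h0, h1, h2⟩
    rcases hc.eq_or_lt with rfl | hc
    · have hw : ∀ i, w i = 0 := by
        intro i
        exact (Finset.sum_eq_zero_iff_of_nonneg (fun i _ => h0 i)).1 h1 i (Finset.mem_univ _)
      have hx : x = 0 := by rw [← h2]; simp [hw]
      refine ⟨v ⟨0, hm⟩, ⟨Pi.single ⟨0, hm⟩ 1, ?_, ?_, ?_⟩, ?_⟩
      · intro j; by_cases h : j = ⟨0, hm⟩
        · subst h; simp
        · simp [h]
      · simp
      · rw [Finset.sum_eq_single ⟨0, hm⟩] <;> simp +contextual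
      · simp [hx]
    · refine ⟨c⁻¹ • x, ⟨fun i => c⁻¹ * w i, ?_, ?_, ?_⟩, ?_⟩
      · intro i; have := h0 i; positivity
      · rw [← Finset.mul_sum, h1]; field_simp
      · simp only [mul_smul, ← Finset.smul_sum, h2]
      · simp [smul_smul, hc.ne']

/-- Integer points of a bounded set are finite in number. -/
lemma finite_lattice {n : ℕ} (S : Set (Fin n → ℝ)) (hS : IsCompact S) :
    {v : Fin n → ℤ | (fun i => (v i : ℝ)) ∈ S}.Finite := by
  obtain ⟨R, hR⟩ := hS.isBounded.subset_closedBall 0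
  refine (Set.finite_Icc (fun _ => -⌈R⌉ : Fin n → ℤ) (fun _ => ⌈R⌉)).subset ?_
  intro v hv
  have h1 := hR hv
  rw [mem_closedBall_zero_iff] at h1
  have h2 : ∀ i, |(v i : ℝ)| ≤ ⌈R⌉ := fun i =>
    ((norm_le_pi_norm (fun i => (v i : ℝ)) i).trans h1).trans (Int.le_ceil R)
  constructor
  · intro i
    have := (abs_le.1 (h2 i)).1
    exact_mod_cast this
  · intro i
    have := (abs_le.1 (h2 i)).2
    exact_mod_cast this

open scoped Classical in
lemma alt_point {m n : ℕ} (hm : 0 < m) (v : Fin m → Fin n → ℤ) (y : Fin n → ℤ) :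
    ∑ S : Finset (Fin m),
      (if (fun i => ((y - ∑ j ∈ S, v j) i : ℝ)) ∈
        ((m - S.card : ℕ) : ℝ) • convexHull ℝ (Set.range fun j => fun i => (v j i : ℝ))
        then (-1 : ℤ) ^ S.card else 0) = 0 := by
  set K : Finset (Fin m) → Set (Fin m → ℝ) := fun S =>
    {w | (∀ i, 0 ≤ w i) ∧ (∀ i ∈ S, 1 ≤ w i) ∧ ∑ i, w i = m ∧
      ∀ k, ∑ i, w i * (v i k : ℝ) = y k} with hKdef
  have hE := euler_char Finset.univ (fun S : Finset (Fin m) => (-1 : ℤ) ^ S.card) m K ?_ ?_ ?_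
  · refine Eq.trans ?_ hE
    refine Finset.sum_congr rfl fun S _ => if_congr ?_ rfl rfl
    have hcard : S.card ≤ m := by simpa using Finset.card_le_univ S
    rw [mem_smul_hull hm _ _ (Nat.cast_nonneg _)]
    have hind : ∑ i, (if i ∈ S then (1:ℝ) else 0) = S.card := by simp
    constructor
    · rintro ⟨w, h0, h1, h2⟩
      refine ⟨fun i => w i + if i ∈ S then 1 else 0, ?_, ?_, ?_, ?_⟩
      · intro i; have := h0 i; dsimp only; split_ifs <;> linarith
      · intro i hi; have := h0 i; simp [hi, this]
      · rw [Finset.sum_add_distrib, h1, hind, Nat.cast_sub hcard]; ring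
      · intro k
        have h3 := congrFun h2 k
        simp only [Finset.sum_apply, Pi.smul_apply, smul_eq_mul, Pi.sub_apply, Int.cast_sub,
          Int.cast_sum] at h3
        simp only [add_mul, Finset.sum_add_distrib, h3, ite_mul, one_mul, zero_mul]
        simp
    · rintro ⟨w, h0, h1, h2, h3⟩
      refine ⟨fun i => w i - if i ∈ S then 1 else 0, ?_, ?_, ?_⟩
      · intro i; have := h0 i; have := h1 i; dsimp only
        split_ifs with h
        · linarith [h1 i h]
        · linarith
      · rw [Finset.sum_sub_distrib, h2, hind, Nat.cast_sub hcard]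
      · ext k
        simp only [Finset.sum_apply, Pi.smul_apply, smul_eq_mul, Pi.sub_apply, Int.cast_sub,
          Int.cast_sum]
        simp only [sub_mul, Finset.sum_sub_distrib, h3, ite_mul, one_mul, zero_mul]
        simp
  · intro S _
    refine (isCompact_Icc (a := (0 : Fin m → ℝ)) (b := fun _ => (m : ℝ))).of_isClosed_subset ?_ ?_
    · simp only [hKdef, Set.ofPred_and, Set.ofPred_forall]
      refine IsClosed.inter ?_ (IsClosed.inter ?_ (IsClosed.inter ?_ ?_))
      · exact isClosed_iInter fun i => isClosed_le continuous_const (continuous_apply i)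
      · exact isClosed_iInter fun i => isClosed_iInter fun _ =>
          isClosed_le continuous_const (continuous_apply i)
      · exact isClosed_eq (by fun_prop) continuous_const
      · exact isClosed_iInter fun i => isClosed_eq (by fun_prop) continuous_const
    · rintro w ⟨h0, h1, h2, h3⟩
      refine ⟨h0, fun i => ?_⟩
      show w i ≤ m
      rw [← h2]
      exact Finset.single_le_sum (fun i _ => h0 i) (Finset.mem_univ i)
  · rintro S _ w ⟨h0, h1, h2, h3⟩ w' ⟨h0', h1', h2', h3'⟩ p q hp hq hpq
    refine ⟨?_, ?_, ?_, ?_⟩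
    · intro i
      have := h0 i; have := h0' i
      simp only [Pi.add_apply, Pi.smul_apply, smul_eq_mul]; positivity
    · intro i hi
      simp only [Pi.add_apply, Pi.smul_apply, smul_eq_mul]
      nlinarith [h1 i hi, h1' i hi]
    · simp only [Pi.add_apply, Pi.smul_apply, smul_eq_mul, Finset.sum_add_distrib,
        ← Finset.mul_sum, h2, h2', ← add_mul, hpq, one_mul]
    · intro k
      simp only [Pi.add_apply, Pi.smul_apply, smul_eq_mul, Finset.sum_add_distrib, add_mul,
        mul_assoc, ← Finset.mul_sum, h3, h3']
      rw [← add_mul, hpq, one_mul]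
  · intro w
    by_cases hw : w ∈ K ∅
    · obtain ⟨h0, -, h2, h3⟩ := hw
      set T : Finset (Fin m) := Finset.univ.filter fun i => 1 ≤ w i with hT
      have hTne : T.Nonempty := by
        by_contra hne
        rw [Finset.not_nonempty_iff_eq_empty] at hne
        have hlt : ∀ i, w i < 1 := by
          intro i
          by_contra hi
          have : i ∈ T := by simp [hT, not_lt.1 hi]
          rw [hne] at this; simp at this
        have : ∑ i, w i < ∑ i : Fin m, (1:ℝ) :=
          Finset.sum_lt_sum_of_nonempty ⟨⟨0, hm⟩, Finset.mem_univ _⟩ fun i _ => hlt i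
        simp [h2] at this
      refine Eq.trans ?_ (Finset.sum_powerset_neg_one_pow_card_of_nonempty hTne)
      clear_value K
      refine (Finset.sum_filter _ _).symm.trans ?_
      refine Finset.sum_congr ?_ fun _ _ => rfl
      ext S
      simp only [Finset.mem_filter, Finset.mem_univ, true_and, Finset.mem_powerset]
      rw [hKdef]
      constructor
      · rintro ⟨_, h1, _⟩ i hi
        simp [hT, h1 i hi]
      · intro h
        exact ⟨h0, fun i hi => by simpa [hT] using h hi, h2, h3⟩
    · refine Finset.sum_eq_zero fun S _ => if_neg fun h => hw ?_
      exact ⟨h.1, by simp, h.2.2.1, h.2.2.2⟩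

lemma alt_count {m n : ℕ} (hm : 0 < m) (v : Fin m → Fin n → ℤ) (P : Set (Fin n → ℝ))
    (hP : P = convexHull ℝ (Set.range fun j => fun i => (v j i : ℝ))) :
    ∑ S : Finset (Fin m), (-1 : ℤ) ^ S.card *
      (latticePointCount (((m - S.card : ℕ) : ℝ) • P) : ℤ) = 0 := by
  classical
  have hPc : IsCompact P := by
    rw [hP]; exact Set.Finite.isCompact_convexHull ℝ (Set.finite_range _)
  set B : Finset (Fin m) → Set (Fin n → ℤ) := fun S =>
    {y | (fun i => (y i : ℝ)) ∈ ((m - S.card : ℕ) : ℝ) • P} with hB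
  set A : Finset (Fin m) → Set (Fin n → ℤ) := fun S =>
    {y | (fun i => ((y - ∑ j ∈ S, v j) i : ℝ)) ∈ ((m - S.card : ℕ) : ℝ) • P} with hA
  have hBf : ∀ S, (B S).Finite := fun S => finite_lattice _ (hPc.smul _)
  have hAB : ∀ S, A S = (fun y => y + ∑ j ∈ S, v j) '' B S := by
    intro S
    ext y
    constructor
    · intro hy
      exact ⟨y - ∑ j ∈ S, v j, hy, by simp⟩
    · rintro ⟨z, hz, rfl⟩
      simp only [hA, Set.mem_ofPred_eq, add_sub_cancel_right]
      exact hz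
  have hAf : ∀ S, (A S).Finite := fun S => by rw [hAB]; exact (hBf S).image _
  have hU : (⋃ S, A S).Finite := Set.finite_iUnion hAf
  have hcnt : ∀ S, (latticePointCount (((m - S.card : ℕ) : ℝ) • P) : ℤ) =
      ∑ y ∈ hU.toFinset, if y ∈ A S then 1 else 0 := by
    intro S
    have h1 : latticePointCount (((m - S.card : ℕ) : ℝ) • P) = (A S).ncard := by
      rw [hAB, Set.ncard_image_of_injective _ (add_left_injective _)]
      rfl
    rw [h1, Set.ncard_eq_toFinset_card _ (hAf S), ← Finset.sum_filter, Finset.sum_const,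
      nsmul_eq_mul, mul_one]
    congr 2
    ext y
    simp only [Set.Finite.mem_toFinset, Finset.mem_filter, Set.mem_iUnion]
    exact ⟨fun h => ⟨⟨S, h⟩, h⟩, fun h => h.2⟩
  simp only [hcnt, Finset.mul_sum]
  rw [Finset.sum_comm]
  refine Finset.sum_eq_zero fun y _ => ?_
  refine Eq.trans ?_ (alt_point hm v y)
  rw [← hP]
  refine Finset.sum_congr rfl fun S _ => ?_
  simp only [hA, Set.mem_ofPred_eq, mul_ite, mul_one, mul_zero]

/-- The constant term of the Ehrhart polynomial is one. -/
lemma ehrhart_zero (n : ℕ) (P : Set (Fin n → ℝ))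
    (hP : IsLatticePolytope P) (hne : P.Nonempty)
    (L : Polynomial ℝ) (hL : IsEhrhartPoly P L) (hdeg : L.natDegree = n) : L.eval 0 = 1 := by
  classical
  obtain ⟨V, hV⟩ := hP
  have hVne : V.Nonempty := by
    by_contra h
    rw [Finset.not_nonempty_iff_eq_empty] at h
    rw [hV, h] at hne
    simp at hne
  obtain ⟨m, hmdef⟩ : ∃ m, m = Fintype.card (V × Fin (n + 1)) := ⟨_, rfl⟩
  have hmn : n < m := by
    have := hVne.card_pos
    simp only [hmdef, Fintype.card_prod, Fintype.card_coe, Fintype.card_fin]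
    nlinarith
  let e : Fin m ≃ V × Fin (n + 1) := (Fintype.equivFinOfCardEq hmdef.symm).symm
  have hhull : P = convexHull ℝ
      (Set.range fun j : Fin m => fun i => (((e j).1 : Fin n → ℤ) i : ℝ)) := by
    rw [hV]
    congr 1
    ext x
    constructor
    · rintro ⟨u, hu, rfl⟩
      exact ⟨e.symm (⟨u, hu⟩, 0), by simp⟩
    · rintro ⟨j, rfl⟩
      exact ⟨(e j).1, (e j).1.2, rfl⟩
  have hsum := alt_count (by omega) _ P hhull
  set f : ℕ → ℤ := fun k => (latticePointCount ((k : ℝ) • P) : ℤ) with hf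
  have h1 : ∑ j ∈ Finset.range (m + 1), (m.choose j : ℤ) * ((-1) ^ j * f (m - j)) = 0 := by
    refine Eq.trans ?_ hsum
    rw [← Finset.powerset_univ,
      Finset.sum_powerset_apply_card (fun j => (-1 : ℤ) ^ j * f (m - j))]
    simp only [Finset.card_univ, Fintype.card_fin, nsmul_eq_mul]
  have hf0 : f 0 = 1 := by
    simp only [hf, Nat.cast_zero, Set.zero_smul_set hne, latticePointCount]
    have : {v : Fin n → ℤ | (fun i => (v i : ℝ)) ∈ (0 : Set (Fin n → ℝ))} = {0} := by
      ext v
      simp [funext_iff]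
    rw [this]; simp
  have h2 := congrFun (Polynomial.fwdDiff_iter_eq_zero_of_degree_lt (P := L) (n := m)
    (by omega)) 0
  rw [fwdDiff_iter_eq_sum_shift, Finset.sum_range_succ'] at h2
  rw [← Finset.sum_range_reflect, Finset.sum_range_succ'] at h1
  have h3 : ((∑ j ∈ Finset.range m, ((-1 : ℤ) ^ (m - (j + 1)) * (m.choose (j + 1) : ℤ)) •
      L.eval (0 + (j + 1) • (1:ℝ))) : ℝ) =
      ((∑ j ∈ Finset.range m, (m.choose (m + 1 - 1 - (j + 1)) : ℤ) *
        ((-1) ^ (m + 1 - 1 - (j + 1)) * f (m - (m + 1 - 1 - (j + 1)))) : ℤ) : ℝ) := by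
    push_cast
    refine Finset.sum_congr rfl fun j hj => ?_
    rw [Finset.mem_range] at hj
    have h4 : m - (m + 1 - 1 - (j + 1)) = j + 1 := by omega
    have h5 : m + 1 - 1 - (j + 1) = m - (j + 1) := by omega
    have h6 := hL (j + 1) (by omega)
    rw [h5] at h4
    simp only [h5, h4]
    rw [Nat.choose_symm (by omega)]
    simp only [nsmul_eq_mul, mul_one, zero_add, h6, hf]
    push_cast
    simp only [zsmul_eq_mul]
    push_cast
    ring
  have h7 := congrArg (fun z : ℤ => (z : ℝ)) h1
  simp only [Int.cast_add] at h7
  rw [← h3] at h7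
  have h8 : ((-1 : ℤ) ^ (m - 0) * (m.choose 0 : ℤ)) • L.eval (0 + 0 • (1:ℝ)) =
      (-1 : ℝ) ^ m * L.eval 0 := by
    simp
  rw [h8] at h2
  simp [hf0] at h7 h2
  have h9 : (-1 : ℝ) ^ m * L.eval 0 = (-1 : ℝ) ^ m * 1 := by
    rw [mul_one]; linarith
  exact mul_left_cancel₀ (pow_ne_zero _ (by norm_num)) h9

theorem Wills_inequalities_of_roots_real_part (n : ℕ) (P : Set (Fin n → ℝ))
    (hP : IsLatticePolytope P) (hfull : (interior P).Nonempty)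
    (L : Polynomial ℝ) (hL : IsEhrhartPoly P L) (hdeg : L.natDegree = n)
    (hroots : ∀ z ∈ (L.map (algebraMap ℝ ℂ)).roots, z.re = -1 / 2)
    (i : ℕ) (hi : i ≤ n) :
    L.coeff i ≤ 2 ^ i * (n.choose i : ℝ) := by
  have h0 := ehrhart_zero n P hP (hfull.mono interior_subset) L hL hdeg
  have hc0 : L.coeff 0 = 1 := by rwa [Polynomial.coeff_zero_eq_eval_zero]
  have htr : L.natTrailingDegree = 0 := by
    rw [Polynomial.natTrailingDegree_eq_zero]; right; simp [hc0]
  have hmon : L.reverse.Monic := by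
    rw [Polynomial.Monic, Polynomial.reverse_leadingCoeff, Polynomial.trailingCoeff, htr, hc0]
  have hL0 : L ≠ 0 := by rintro rfl; simp at hc0
  have hnd : L.reverse.natDegree = n := by rw [Polynomial.reverse_natDegree, htr, hdeg]; simp
  have hb := Polynomial.coeff_le_of_roots_le (p := L.reverse) (f := algebraMap ℝ ℂ) (B := 2)
    (n - i) hmon (IsAlgClosed.splits _) ?_
  · rw [hnd, Polynomial.coeff_map, Polynomial.coeff_reverse, hdeg,
      Polynomial.revAt_le (by omega)] at hb
    have h1 : n - (n - i) = i := by omega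
    rw [h1, Nat.choose_symm hi] at hb
    simp only [Complex.coe_algebraMap, Complex.norm_real] at hb
    exact (le_abs_self _).trans hb
  · intro z hz
    have hz' := (Polynomial.mem_roots'.1 hz).2
    rw [Polynomial.IsRoot, Polynomial.eval_map] at hz'
    by_cases hz0 : z = 0
    · simp [hz0]
    · have hzi : z⁻¹ ≠ 0 := inv_ne_zero hz0
      let _ := invertibleOfNonzero hzi
      have h2 := (Polynomial.eval₂_reverse_eq_zero_iff (algebraMap ℝ ℂ) z⁻¹ L).1 (by
        rw [invOf_eq_inv, inv_inv]; exact hz')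
      have h3 := hroots z⁻¹ (by
        rw [Polynomial.mem_roots', Polynomial.IsRoot, Polynomial.eval_map]
        exact ⟨(Polynomial.map_ne_zero_iff (algebraMap ℝ ℂ).injective).2 hL0, h2⟩)
      have h4 : (1/2 : ℝ) ≤ ‖z⁻¹‖ := by
        have := Complex.abs_re_le_norm z⁻¹
        rw [h3] at this
        norm_num [abs_of_neg] at this ⊢
        linarith
      rw [norm_inv] at h4
      have hzp : 0 < ‖z‖ := norm_pos_iff.2 hz0
      rw [le_inv_comm₀ (by norm_num) hzp] at h4
      norm_num at h4
      exact h4
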